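/- arXiv:1803.08849 — 3 statements merged into one kernel-verified Lean document; each statement's English description precedes it below -/
import Mathlib

section
/- Let n be a positive integer, let A be an n×n real matrix, and let s, y ∈ ℝⁿ with s ≠ 0. Set A₊ = A + ((y − A s) sᵀ)/(sᵀ s). Then A₊ s = y, and for every n×n real matrix B satisfying B s = y one has ‖A₊ − A‖_F ≤ ‖B − A‖_F in the Frobenius norm, with equality if and only if B = A₊. That is, Broyden's good update is the unique least-change (Frobenius-norm) secant update of A. -/
open Matrix

/-!
The rows of `A₊ - A` are all multiples of `s`, while `B - A₊` annihilates
`s` whenever `B s = y`. The two matrices are therefore Frobenius-orthogonal, and Pythagoras gives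
`‖B - A‖² = ‖A₊ - A‖² + ‖B - A₊‖²` (`frob_sq_pythagoras`), from which both the inequality and the
equality case can be read off.
-/

/-- A matrix `C` whose rows are multiples of `s` is Frobenius-orthogonal to every matrix `D`
annihilating `s`, so the squared norms add. -/
lemma frob_sq_pythagoras {n : ℕ} (C D : Matrix (Fin n) (Fin n) ℝ) (c s : Fin n → ℝ)
    (hC : ∀ i j, C i j = c i * s j) (hD : D.mulVec s = 0) :
    ∑ i, ∑ j, ((C + D) i j) ^ 2 = ∑ i, ∑ j, (C i j) ^ 2 + ∑ i, ∑ j, (D i j) ^ 2 := by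
  rw [← Finset.sum_add_distrib]
  refine Finset.sum_congr rfl fun i _ => ?_
  have hrow : ∑ j, D i j * s j = 0 := congrFun hD i
  have hexp : ∑ j, ((C + D) i j) ^ 2
      = ∑ j, (C i j) ^ 2 + ∑ j, (D i j) ^ 2 + 2 * c i * ∑ j, D i j * s j := by
    rw [Finset.mul_sum, ← Finset.sum_add_distrib, ← Finset.sum_add_distrib]
    refine Finset.sum_congr rfl fun j _ => ?_
    rw [Matrix.add_apply, hC]
    ring
  rw [hexp, hrow, mul_zero, add_zero]

/-- Broyden's good update is the unique least-change (Frobenius-norm) secant update: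
`A₊ s = y`, and for every `B` with `B s = y` one has `‖A₊ − A‖_F ≤ ‖B − A‖_F`,
with equality iff `B = A₊`. -/
theorem broyden_least_change_secant (n : ℕ) (hn : 0 < n)
    (A : Matrix (Fin n) (Fin n) ℝ) (s y : Fin n → ℝ) (hs : s ≠ 0)
    (Aplus : Matrix (Fin n) (Fin n) ℝ)
    (hAplus : Aplus = A + (s ⬝ᵥ s)⁻¹ • vecMulVec (y - A.mulVec s) s)
    (frob : Matrix (Fin n) (Fin n) ℝ → ℝ)
    (hfrob : ∀ M : Matrix (Fin n) (Fin n) ℝ, frob M = Real.sqrt (∑ i, ∑ j, (M i j) ^ 2)) :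
    Aplus.mulVec s = y ∧
      ∀ B : Matrix (Fin n) (Fin n) ℝ, B.mulVec s = y →
        frob (Aplus - A) ≤ frob (B - A) ∧ (frob (Aplus - A) = frob (B - A) ↔ B = Aplus) := by
  have hss : s ⬝ᵥ s ≠ 0 := fun h => hs (dotProduct_self_eq_zero.mp h)
  have hsec : Aplus.mulVec s = y := by
    ext i
    simp only [hAplus, Matrix.add_mulVec, Matrix.smul_mulVec, Matrix.vecMulVec_mulVec,
      Pi.add_apply, Pi.smul_apply, Pi.sub_apply, smul_eq_mul, MulOpposite.smul_eq_mul_unop,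
      MulOpposite.unop_op]
    field_simp
    ring
  refine ⟨hsec, fun B hB => ?_⟩
  have hpyth := frob_sq_pythagoras (Aplus - A) (B - Aplus)
    (fun i => (s ⬝ᵥ s)⁻¹ * (y - A.mulVec s) i) s
    (fun i j => by simp [hAplus, Matrix.vecMulVec_apply, mul_assoc])
    (by rw [Matrix.sub_mulVec, hB, hsec, sub_self])
  rw [show Aplus - A + (B - Aplus) = B - A by abel] at hpyth
  have hC : 0 ≤ ∑ i, ∑ j, ((Aplus - A) i j) ^ 2 := by positivity
  have hD : 0 ≤ ∑ i, ∑ j, ((B - Aplus) i j) ^ 2 := by positivity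
  rw [hfrob, hfrob]
  refine ⟨Real.sqrt_le_sqrt (by linarith), fun h => ?_, fun h => by rw [h]⟩
  rw [Real.sqrt_inj hC (by linarith)] at h
  have hD0 : ∑ i, ∑ j, ((B - Aplus) i j) ^ 2 = 0 := by linarith
  ext i j
  have hi := (Finset.sum_eq_zero_iff_of_nonneg fun i _ => by positivity).mp hD0 i
    (Finset.mem_univ i)
  have hij := (Finset.sum_eq_zero_iff_of_nonneg fun j _ => by positivity).mp hi j
    (Finset.mem_univ j)
  exact sub_eq_zero.mp (pow_eq_zero_iff two_ne_zero |>.mp hij)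
end

section
/- Let n be a positive integer, let B be an n×n real symmetric positive definite matrix, and let s, y ∈ ℝⁿ with sᵀ y > 0. Then the BFGS-updated matrix B₊ = B + (y yᵀ)/(yᵀ s) − (B s (B s)ᵀ)/(sᵀ B s) is symmetric positive definite. -/
/-!
Fix `x ≠ 0`, put `c = (sᵀ B x) / (sᵀ B s)` and let `z = x - c s` be the component of `x` that is
`B`-orthogonal to `s`. Then `xᵀ B₊ x = zᵀ B z + (yᵀ x)² / (yᵀ s)`, a sum of nonnegative terms.
If `z ≠ 0` the first term is positive; if `z = 0` then `x = c s` with `c ≠ 0`, and the second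
term is positive since `yᵀ x = c (yᵀ s) ≠ 0`.
-/

open Matrix

/-- The BFGS update preserves symmetric positive definiteness when `sᵀ y > 0`. -/
theorem bfgs_posDef (n : ℕ) (hn : 0 < n)
    (B : Matrix (Fin n) (Fin n) ℝ) (hB : B.PosDef)
    (s y : Fin n → ℝ) (hsy : 0 < s ⬝ᵥ y) :
    (B + (y ⬝ᵥ s)⁻¹ • vecMulVec y y
        - (s ⬝ᵥ B.mulVec s)⁻¹ • vecMulVec (B.mulVec s) (B.mulVec s)).PosDef := by
  have hys : 0 < y ⬝ᵥ s := by rwa [dotProduct_comm]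
  have hpos : ∀ x : Fin n → ℝ, x ≠ 0 → 0 < x ⬝ᵥ B *ᵥ x := fun x hx => by
    simpa using hB.dotProduct_mulVec_pos hx
  have hBT : Bᵀ = B := by simpa [IsHermitian] using hB.isHermitian
  have hsymm : ∀ u v : Fin n → ℝ, u ⬝ᵥ B *ᵥ v = v ⬝ᵥ B *ᵥ u := fun u v => by
    rw [dotProduct_mulVec, ← mulVec_transpose, hBT, dotProduct_comm]
  have hs0 : s ≠ 0 := by
    rintro rfl
    simp at hsy
  have hsBs := hpos s hs0
  refine PosDef.of_dotProduct_mulVec_pos ?_ fun x hx => ?_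
  · simp [IsHermitian, hBT, transpose_vecMulVec]
  · set c := (s ⬝ᵥ B *ᵥ s)⁻¹ * (s ⬝ᵥ B *ᵥ x) with hc
    have key : star x ⬝ᵥ ((B + (y ⬝ᵥ s)⁻¹ • vecMulVec y y
        - (s ⬝ᵥ B *ᵥ s)⁻¹ • vecMulVec (B *ᵥ s) (B *ᵥ s)) *ᵥ x)
        = (x - c • s) ⬝ᵥ B *ᵥ (x - c • s) + (y ⬝ᵥ s)⁻¹ * (y ⬝ᵥ x) ^ 2 := by
      simp only [star_trivial, sub_mulVec, add_mulVec, smul_mulVec, vecMulVec_mulVec,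
        dotProduct_sub, dotProduct_add, dotProduct_smul, mulVec_sub, mulVec_smul,
        sub_dotProduct, smul_dotProduct, smul_eq_mul, op_smul_eq_smul]
      rw [dotProduct_comm (B *ᵥ s) x, hsymm x s, dotProduct_comm x y, hc]
      field_simp
      ring
    rw [key]
    by_cases hz : x - c • s = 0
    · have hxc : x = c • s := sub_eq_zero.mp hz
      have hc0 : c ≠ 0 := by
        intro h
        rw [h, zero_smul] at hxc
        exact hx hxc
      have hyx : y ⬝ᵥ x ≠ 0 := by
        rw [hxc, dotProduct_smul, smul_eq_mul]
        exact mul_ne_zero hc0 hys.ne'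
      rw [hz, zero_dotProduct, zero_add]
      positivity
    · have := hpos _ hz
      positivity
end

section
/- Let n, m be positive integers, let C be an invertible n×n real matrix, set P = C Cᵀ, let S, Y be n×m real matrices, let γ ∈ ℝ, and let M̂ be an m×m real matrix such that M̂ + γ Sᵀ Y is invertible. Set Ŝ = C⁻¹ S and Ŷ = Cᵀ Y, and define the transformed compact L-Broyden inverse approximation Ĝ = γ I − (γ Ŷ − Ŝ)(M̂ + γ Ŝᵀ Ŷ)⁻¹ (γ Ŝᵀ). Then C Ĝ Cᵀ = γ P − (γ P Y − S)(M̂ + γ Sᵀ Y)⁻¹ (γ Sᵀ). -/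
/-! Conjugation by `C` acts only on the outer factors: `C Ŝ = S` and `C Ŷ = P Y`, while the inner
matrix is unchanged because `Ŝᵀ Ŷ = Sᵀ Y`. The identity then follows by distributing `C` and `Cᵀ`
over the difference defining `Ĝ`. -/

open Matrix

/-- Transformation preconditioning of the compact L-Broyden representation:
`C Ĝ Cᵀ = γ P − (γ P Y − S)(M̂ + γ Sᵀ Y)⁻¹ (γ Sᵀ)` with `P = C Cᵀ`. -/
theorem lbroyden_compact_transformation (n m : ℕ) (hn : 0 < n) (hm : 0 < m)
    (C : Matrix (Fin n) (Fin n) ℝ) (hC : IsUnit C)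
    (P : Matrix (Fin n) (Fin n) ℝ) (hP : P = C * Cᵀ)
    (S Y : Matrix (Fin n) (Fin m) ℝ) (γ : ℝ)
    (Mhat : Matrix (Fin m) (Fin m) ℝ) (hMhat : IsUnit (Mhat + γ • (Sᵀ * Y)))
    (Shat Yhat : Matrix (Fin n) (Fin m) ℝ)
    (hShat : Shat = C⁻¹ * S) (hYhat : Yhat = Cᵀ * Y)
    (Ghat : Matrix (Fin n) (Fin n) ℝ)
    (hGhat : Ghat = γ • (1 : Matrix (Fin n) (Fin n) ℝ) -
        (γ • Yhat - Shat) * (Mhat + γ • (Shatᵀ * Yhat))⁻¹ * (γ • Shatᵀ)) :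
    C * Ghat * Cᵀ = γ • P - (γ • (P * Y) - S) * (Mhat + γ • (Sᵀ * Y))⁻¹ * (γ • Sᵀ) := by
  have hCS : C * Shat = S := by
    rw [hShat, mul_nonsing_inv_cancel_left _ _ ((isUnit_iff_isUnit_det C).mp hC)]
  have hSC : Shatᵀ * Cᵀ = Sᵀ := by rw [← transpose_mul, hCS]
  have hSY : Shatᵀ * Yhat = Sᵀ * Y := by rw [hYhat, ← Matrix.mul_assoc, hSC]
  -- `C` and `Cᵀ` are absorbed by the outer factors of the low-rank correction.
  have hleft : C * (γ • Yhat - Shat) = γ • (P * Y) - S := by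
    rw [Matrix.mul_sub, Matrix.mul_smul, hCS, hYhat, hP, Matrix.mul_assoc]
  have hright : (γ • Shatᵀ) * Cᵀ = γ • Sᵀ := by rw [Matrix.smul_mul, hSC]
  rw [hGhat, hSY, ← hleft, ← hright, hP]
  simp only [Matrix.mul_sub, Matrix.sub_mul, Matrix.mul_smul, Matrix.smul_mul, Matrix.mul_one,
    Matrix.mul_assoc]
end
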